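/- Let β : ℤ^n → ℤ^m be an integer matrix map and α = 2β. Let K ⊆ ℤ^m be a subgroup with im(β) ⊆ K. If K/im(β) ≅ ℤ^r ⊕ ℤ/d_1ℤ ⊕ ... ⊕ ℤ/d_kℤ with 1 < d_1 | ... | d_k, and β has rank ρ as a map into K, then K/im(α) ≅ ℤ^r ⊕ ℤ/2d_1ℤ ⊕ ... ⊕ ℤ/2d_kℤ ⊕ (ℤ/2ℤ)^{ρ−k}. -/

import Mathlib

open Matrix

open scoped Pointwise

section Cancellation

variable {R A B C : Type*} [Ring R] [AddCommGroup A] [AddCommGroup B] [AddCommGroup C]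
  [Module R A] [Module R B] [Module R C]

/-- If an isomorphism `C × A ≃ C × B` restricts to the identity on the `C`-components, then its
Schur complement is an isomorphism `A ≃ B`. -/
theorem nonempty_linearEquiv_of_fst_apply_inl (φ : (C × A) ≃ₗ[R] C × B)
    (h : ∀ c, (φ (c, 0)).1 = c) : Nonempty (A ≃ₗ[R] B) := by
  have key : ∀ a, φ (-(φ (0, a)).1, a) = (0, (φ (-(φ (0, a)).1, a)).2) := by
    intro a
    have hsplit : φ (-(φ (0, a)).1, a) = φ (-(φ (0, a)).1, 0) + φ (0, a) := by
      rw [← map_add]; simp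
    refine Prod.ext ?_ rfl
    rw [hsplit, Prod.fst_add, h]
    simp
  let g : B →ₗ[R] A := LinearMap.snd R C A ∘ₗ φ.symm.toLinearMap ∘ₗ LinearMap.inr R C B
  refine ⟨(LinearEquiv.ofBijective g ⟨?_, ?_⟩).symm⟩
  · rw [injective_iff_map_eq_zero]
    intro b hb
    have hb' : (φ.symm (0, b)).2 = 0 := hb
    have hx : φ.symm (0, b) = ((φ.symm (0, b)).1, 0) := Prod.ext rfl hb'
    have hc := h (φ.symm (0, b)).1
    rw [← hx, φ.apply_symm_apply] at hc
    rw [← hc] at hx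
    have hzero : ((0 : C), b) = 0 := by
      rw [← φ.symm.map_eq_zero_iff, hx]; rfl
    exact congrArg Prod.snd hzero
  · intro a
    refine ⟨(φ (-(φ (0, a)).1, a)).2, ?_⟩
    change (φ.symm (0, (φ (-(φ (0, a)).1, a)).2)).2 = a
    rw [← key a, φ.symm_apply_apply]

end Cancellation

/-- The summand `ℤ/2ℤ` can be cancelled from direct sums of abelian groups. -/
theorem nonempty_linearEquiv_of_zmod_two_prod {A B : Type*} [AddCommGroup A] [AddCommGroup B]
    (φ : (ZMod 2 × A) ≃ₗ[ℤ] ZMod 2 × B) : Nonempty (A ≃ₗ[ℤ] B) := by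
  have hlin : ∀ f : ZMod 2 →ₗ[ℤ] ZMod 2, f 1 = 1 → ∀ c, f c = c := by
    intro f hf c
    fin_cases c
    · exact map_zero f
    · exact hf
  have hcases : ∀ c : ZMod 2, c = 1 ∨ c = 0 := by decide
  rcases hcases (φ (1, 0)).1 with h1 | h0
  · exact nonempty_linearEquiv_of_fst_apply_inl φ
      (hlin (LinearMap.fst ℤ _ _ ∘ₗ φ.toLinearMap ∘ₗ LinearMap.inl ℤ _ _) h1)
  · let u : B →ₗ[ℤ] ZMod 2 := LinearMap.fst ℤ _ _ ∘ₗ φ.symm.toLinearMap ∘ₗ LinearMap.inr ℤ _ _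
    let shear : (ZMod 2 × B) ≃ₗ[ℤ] ZMod 2 × B :=
      LinearEquiv.prodComm ℤ _ _ ≪≫ₗ
        (LinearEquiv.refl ℤ B).skewProd (LinearEquiv.refl ℤ (ZMod 2)) u ≪≫ₗ
        LinearEquiv.prodComm ℤ _ _
    refine nonempty_linearEquiv_of_fst_apply_inl (φ ≪≫ₗ shear)
      (hlin (LinearMap.fst ℤ _ _ ∘ₗ (φ ≪≫ₗ shear).toLinearMap ∘ₗ LinearMap.inl ℤ _ _) ?_)
    change (φ (1, 0)).1 + (φ.symm (0, (φ (1, 0)).2)).1 = 1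
    have hx : ((0 : ZMod 2), (φ (1, 0)).2) = φ (1, 0) := Prod.ext h0.symm rfl
    rw [hx, h0, φ.symm_apply_apply, zero_add]

/-- Splitting off the first coordinate of `(ℤ/2ℤ)ˢ⁺¹ ⊕ M`. -/
def consProdLinearEquiv (s : ℕ) (M : Type*) [AddCommGroup M] :
    (ZMod 2 × ((Fin s → ZMod 2) × M)) ≃ₗ[ℤ] (Fin (s + 1) → ZMod 2) × M :=
  (LinearEquiv.prodAssoc ℤ (ZMod 2) (Fin s → ZMod 2) M).symm ≪≫ₗ
    (Fin.consLinearEquiv ℤ fun _ : Fin (s + 1) => ZMod 2).prodCongr (LinearEquiv.refl ℤ M)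

/-- Elementary abelian 2-groups can be cancelled from direct sums of abelian groups. -/
theorem nonempty_linearEquiv_of_pi_zmod_two_prod (s : ℕ) {A B : Type*} [AddCommGroup A]
    [AddCommGroup B] (φ : ((Fin s → ZMod 2) × A) ≃ₗ[ℤ] (Fin s → ZMod 2) × B) :
    Nonempty (A ≃ₗ[ℤ] B) := by
  induction s generalizing A B with
  | zero => exact ⟨LinearEquiv.uniqueProd.symm ≪≫ₗ φ ≪≫ₗ LinearEquiv.uniqueProd⟩
  | succ s ih =>
    obtain ⟨ψ⟩ := nonempty_linearEquiv_of_zmod_two_prod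
      (consProdLinearEquiv s A ≪≫ₗ φ ≪≫ₗ (consProdLinearEquiv s B).symm)
    exact ih ψ

section Schanuel

variable {R P Q G : Type*} [CommRing R] [AddCommGroup P] [AddCommGroup Q] [AddCommGroup G]
  [Module R P] [Module R Q] [Module R G]

/-- The quotient of a product by a product of submodules is the product of the quotients. -/
noncomputable def quotientProdLinearEquiv (S : Submodule R P) (T : Submodule R Q) :
    ((P × Q) ⧸ S.prod T) ≃ₗ[R] (P ⧸ S) × (Q ⧸ T) :=
  Submodule.quotEquivOfEq _ _ (by rw [LinearMap.ker_prodMap, S.ker_mkQ, T.ker_mkQ]) ≪≫ₗ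
    (S.mkQ.prodMap T.mkQ).quotKerEquivOfSurjective
      (Function.Surjective.prodMap S.mkQ_surjective T.mkQ_surjective)

/-- **Schanuel's lemma** for scaled kernels: if `π : P → G` and `π' : Q → G` are surjections from
projective modules, then `P / a ker π ⊕ Q / a Q ≅ P / a P ⊕ Q / a ker π'`. -/
theorem nonempty_quotient_smul_ker_prod_linearEquiv [Module.Projective R P]
    [Module.Projective R Q] (π : P →ₗ[R] G) (π' : Q →ₗ[R] G) (hπ : Function.Surjective π)
    (hπ' : Function.Surjective π') (a : R) :
    Nonempty (((P ⧸ a • LinearMap.ker π) × (Q ⧸ a • (⊤ : Submodule R Q))) ≃ₗ[R]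
      (P ⧸ a • (⊤ : Submodule R P)) × (Q ⧸ a • LinearMap.ker π')) := by
  obtain ⟨u, hu⟩ := Module.projective_lifting_property π' π hπ'
  obtain ⟨v, hv⟩ := Module.projective_lifting_property π π' hπ
  replace hu : ∀ p, π' (u p) = π p := fun p => LinearMap.congr_fun hu p
  replace hv : ∀ q, π (v q) = π' q := fun q => LinearMap.congr_fun hv q
  let addSnd : (P × Q) ≃ₗ[R] P × Q := LinearEquiv.prodComm R P Q ≪≫ₗ
    (LinearEquiv.refl R Q).skewProd (LinearEquiv.refl R P) v ≪≫ₗ LinearEquiv.prodComm R Q P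
  let addFst : (P × Q) ≃ₗ[R] P × Q := (LinearEquiv.refl R P).skewProd (LinearEquiv.refl R Q) u
  let Φ := addSnd.symm ≪≫ₗ addFst
  have hΦ : ∀ x, π' (Φ x).2 = π x.1 := by
    intro x
    obtain ⟨y, rfl⟩ := addSnd.surjective x
    change π' (addFst (addSnd.symm (addSnd y))).2 = π (y.1 + v y.2)
    rw [addSnd.symm_apply_apply]
    change π' (y.2 + u y.1) = _
    rw [map_add, map_add, hu, hv, add_comm]
  have hmap : ((a • LinearMap.ker π).prod (a • (⊤ : Submodule R Q))).map Φ.toLinearMap =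
      (a • (⊤ : Submodule R P)).prod (a • LinearMap.ker π') := by
    ext x
    simp only [Submodule.mem_map, Submodule.mem_prod, Submodule.mem_smul_pointwise_iff_exists,
      LinearMap.mem_ker]
    constructor
    · rintro ⟨⟨_, _⟩, ⟨⟨p, hp, rfl⟩, ⟨q, -, rfl⟩⟩, rfl⟩
      have hsmul : Φ (a • p, a • q) = a • Φ (p, q) := by rw [← map_smul]; rfl
      refine ⟨⟨(Φ (p, q)).1, trivial, ?_⟩, ⟨(Φ (p, q)).2, (hΦ _).trans hp, ?_⟩⟩
      · exact (congrArg Prod.fst hsmul).symm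
      · exact (congrArg Prod.snd hsmul).symm
    · obtain ⟨x₁, x₂⟩ := x
      rintro ⟨⟨p, -, rfl⟩, ⟨q, hq, rfl⟩⟩
      obtain ⟨y, hy⟩ := Φ.surjective (p, q)
      refine ⟨a • y, ⟨⟨y.1, ?_, rfl⟩, ⟨y.2, trivial, rfl⟩⟩, ?_⟩
      · rw [← hΦ, hy]; exact hq
      · change Φ (a • y) = _
        rw [map_smul, hy]; rfl
  exact ⟨(quotientProdLinearEquiv _ _).symm ≪≫ₗ Submodule.Quotient.equiv _ _ Φ hmap ≪≫ₗ
    quotientProdLinearEquiv _ _⟩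

end Schanuel

/-- A free abelian group of rank `s` modulo doubles is `(ℤ/2ℤ)ˢ`. -/
theorem nonempty_quotient_two_smul_top_linearEquiv {M : Type*} [AddCommGroup M]
    [Module.Free ℤ M] [Module.Finite ℤ M] {s : ℕ} (hs : Module.finrank ℤ M = s) :
    Nonempty ((M ⧸ (2 : ℤ) • (⊤ : Submodule ℤ M)) ≃ₗ[ℤ] (Fin s → ZMod 2)) := by
  let e : M ≃ₗ[ℤ] (Fin s → ℤ) := (Module.finBasisOfFinrankEq ℤ M hs).equivFun
  let red : (Fin s → ℤ) →ₗ[ℤ] (Fin s → ZMod 2) :=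
    LinearMap.pi fun i => (Int.castAddHom (ZMod 2)).toIntLinearMap ∘ₗ LinearMap.proj i
  have hred : Function.Surjective (red ∘ₗ e.toLinearMap) := by
    intro y
    choose x hx using fun i => ZMod.intCast_surjective (y i)
    obtain ⟨z, rfl⟩ := e.surjective x
    exact ⟨z, funext hx⟩
  refine ⟨Submodule.quotEquivOfEq _ _ ?_ ≪≫ₗ
    (red ∘ₗ e.toLinearMap).quotKerEquivOfSurjective hred⟩
  ext x
  rw [Submodule.mem_smul_pointwise_iff_exists, LinearMap.mem_ker]
  constructor
  · rintro ⟨y, -, rfl⟩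
    rw [map_zsmul]
    funext i
    have htwo : ∀ c : ZMod 2, (2 : ℤ) • c = 0 := by decide
    exact htwo _
  · intro h
    have hdvd : ∀ i, ∃ c, e x i = 2 * c := fun i =>
      (ZMod.intCast_zmod_eq_zero_iff_dvd _ 2).1 (congrFun h i)
    choose y hy using hdvd
    refine ⟨e.symm y, trivial, e.injective ?_⟩
    rw [map_zsmul, e.apply_symm_apply]
    funext i
    exact (hy i).symm

/-- The rank of `ℤʳ ⊕ ⨁ ℤ/dⱼℤ` is `r` when all `dⱼ` are nonzero. -/
theorem finrank_pi_int_prod_pi_zmod (r : ℕ) {k : ℕ} (d : Fin k → ℕ) (hd : ∀ j, d j ≠ 0) :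
    Module.finrank ℤ ((Fin r → ℤ) × ((j : Fin k) → ZMod (d j))) = r := by
  have hne : ∀ j, NeZero (d j) := fun j => ⟨hd j⟩
  have hker : Module.finrank ℤ
      (LinearMap.ker (LinearMap.fst ℤ (Fin r → ℤ) ((j : Fin k) → ZMod (d j)))) = 0 := by
    rw [Module.finrank_eq_zero_iff]
    rintro ⟨⟨x, y⟩, hx⟩
    obtain rfl : x = 0 := hx
    refine ⟨∏ j, (d j : ℤ), Finset.prod_ne_zero_iff.2 fun j _ => by exact_mod_cast hd j, ?_⟩
    refine Subtype.ext (Prod.ext (smul_zero (∏ j, (d j : ℤ))) (funext fun j => ?_))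
    change (∏ j, (d j : ℤ)) • y j = 0
    obtain ⟨c, hc⟩ := Finset.dvd_prod_of_mem (fun j => (d j : ℤ)) (Finset.mem_univ j)
    rw [hc, zsmul_eq_mul]
    simp
  have hquot := ((LinearMap.fst ℤ (Fin r → ℤ)
    ((j : Fin k) → ZMod (d j))).quotKerEquivOfSurjective LinearMap.fst_surjective).finrank_eq
  rw [← Submodule.finrank_quotient_add_finrank
    (LinearMap.ker (LinearMap.fst ℤ (Fin r → ℤ) ((j : Fin k) → ZMod (d j)))), hker, hquot]
  simp

/-- A free abelian group surjecting onto `ℤʳ ⊕ ⨁_{j < k} ℤ/dⱼℤ`, where the `dⱼ` have a common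
prime factor, has rank at least `r + k`. -/
theorem add_le_finrank_of_surjective {M : Type*} [AddCommGroup M] [Module.Free ℤ M]
    [Module.Finite ℤ M] {r k p : ℕ} [Fact p.Prime] (d : Fin k → ℕ) (hp : ∀ j, p ∣ d j)
    (f : M →ₗ[ℤ] (Fin r → ℤ) × ((j : Fin k) → ZMod (d j))) (hf : Function.Surjective f) :
    r + k ≤ Module.finrank ℤ M := by
  let red : ((Fin r → ℤ) × ((j : Fin k) → ZMod (d j))) →ₗ[ℤ]
      (Fin r → ZMod p) × (Fin k → ZMod p) :=
    (LinearMap.pi fun i => (Int.castAddHom (ZMod p)).toIntLinearMap ∘ₗ LinearMap.proj i).prodMap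
      (LinearMap.pi fun j =>
        (ZMod.castHom (hp j) (ZMod p)).toAddMonoidHom.toIntLinearMap ∘ₗ LinearMap.proj j)
  have hred : Function.Surjective red := by
    rintro ⟨x, y⟩
    choose x' hx using fun i => ZMod.intCast_surjective (x i)
    choose y' hy using fun j => ZMod.castHom_surjective (hp j) (y j)
    exact ⟨(x', y'), Prod.ext (funext hx) (funext hy)⟩
  let b := Module.finBasis ℤ M
  let g : M →ₗ[ℤ] (Fin r → ZMod p) × (Fin k → ZMod p) := red ∘ₗ f
  have hg : Function.Surjective g := Function.Surjective.comp (g := red) hred hf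
  have hspan : Submodule.span ℤ (Set.range (g ∘ b)) = ⊤ := by
    rw [Set.range_comp, Submodule.span_image, b.span_eq, Submodule.map_top,
      LinearMap.range_eq_top.2 hg]
  have hspan' : Submodule.span (ZMod p) (Set.range (g ∘ b)) = ⊤ := by
    refine eq_top_iff.2 fun x _ => ?_
    exact Submodule.span_le_restrictScalars ℤ (ZMod p) _ (hspan ▸ Submodule.mem_top : x ∈ _)
  have hle := finrank_range_le_card (R := ZMod p) (g ∘ b)
  rw [Set.finrank, hspan', finrank_top] at hle
  simpa using hle

section StandardPresentation

variable (r t : ℕ) {k : ℕ} (d : Fin k → ℕ)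

/-- The standard presentation `ℤʳ ⊕ ℤᵏ ⊕ ℤᵗ → ℤʳ ⊕ ⨁ ℤ/dⱼℤ`, zero on the last summand. -/
def standardPresentation : ((Fin r → ℤ) × (Fin k → ℤ) × (Fin t → ℤ)) →ₗ[ℤ]
    (Fin r → ℤ) × ((j : Fin k) → ZMod (d j)) :=
  LinearMap.id.prodMap ((LinearMap.pi fun j =>
    (Int.castAddHom (ZMod (d j))).toIntLinearMap ∘ₗ LinearMap.proj j) ∘ₗ LinearMap.fst ℤ _ _)

theorem standardPresentation_surjective :
    Function.Surjective (standardPresentation r t d) := by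
  rintro ⟨x, y⟩
  choose y' hy using fun j => ZMod.intCast_surjective (y j)
  exact ⟨(x, y', 0), Prod.ext rfl (funext hy)⟩

/-- Doubling the relations of the standard presentation doubles every modulus and adds a copy of
`ℤ/2ℤ` for every redundant generator. -/
theorem nonempty_quotient_two_smul_ker_standardPresentation_linearEquiv :
    Nonempty ((((Fin r → ℤ) × (Fin k → ℤ) × (Fin t → ℤ)) ⧸
        (2 : ℤ) • LinearMap.ker (standardPresentation r t d)) ≃ₗ[ℤ]
      (Fin r → ℤ) × ((j : Fin k) → ZMod (2 * d j)) × (Fin t → ZMod 2)) := by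
  let red : ((Fin r → ℤ) × (Fin k → ℤ) × (Fin t → ℤ)) →ₗ[ℤ]
      (Fin r → ℤ) × ((j : Fin k) → ZMod (2 * d j)) × (Fin t → ZMod 2) :=
    LinearMap.id.prodMap (LinearMap.prodMap
      (LinearMap.pi fun j => (Int.castAddHom (ZMod (2 * d j))).toIntLinearMap ∘ₗ LinearMap.proj j)
      (LinearMap.pi fun i => (Int.castAddHom (ZMod 2)).toIntLinearMap ∘ₗ LinearMap.proj i))
  have hred : Function.Surjective red := by
    rintro ⟨x, y, z⟩
    choose y' hy using fun j => ZMod.intCast_surjective (y j)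
    choose z' hz using fun i => ZMod.intCast_surjective (z i)
    exact ⟨(x, y', z'), Prod.ext rfl (Prod.ext (funext hy) (funext hz))⟩
  refine ⟨Submodule.quotEquivOfEq _ _ ?_ ≪≫ₗ red.quotKerEquivOfSurjective hred⟩
  ext ⟨x, y, z⟩
  rw [Submodule.mem_smul_pointwise_iff_exists, LinearMap.mem_ker]
  constructor
  · rintro ⟨⟨x', y', z'⟩, h, hxyz⟩
    have hx' : x' = 0 := congrArg Prod.fst h
    have hy' : ∀ j, (d j : ℤ) ∣ y' j := fun j =>
      (ZMod.intCast_zmod_eq_zero_iff_dvd _ _).1 (congrFun (congrArg Prod.snd h) j)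
    obtain ⟨rfl, rfl, rfl⟩ : (2 : ℤ) • x' = x ∧ (2 : ℤ) • y' = y ∧ (2 : ℤ) • z' = z := by
      simpa using hxyz
    refine Prod.ext ?_ (Prod.ext (funext fun j => ?_) (funext fun i => ?_))
    · change (2 : ℤ) • x' = 0
      rw [hx', smul_zero]
    · refine (ZMod.intCast_zmod_eq_zero_iff_dvd _ _).2 ?_
      push_cast
      exact mul_dvd_mul_left 2 (hy' j)
    · exact (ZMod.intCast_zmod_eq_zero_iff_dvd (2 * z' i) 2).2 (Dvd.intro _ rfl)
  · intro h
    have hx : x = 0 := congrArg Prod.fst h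
    have hy : ∀ j, ∃ c, y j = 2 * d j * c := fun j => by
      have := (ZMod.intCast_zmod_eq_zero_iff_dvd _ _).1
        (congrFun (congrArg (fun w => w.2.1) h) j)
      push_cast at this
      exact this
    have hz : ∀ i, ∃ c, z i = 2 * c := fun i =>
      (ZMod.intCast_zmod_eq_zero_iff_dvd _ 2).1 (congrFun (congrArg (fun w => w.2.2) h) i)
    choose y' hy' using hy
    choose z' hz' using hz
    refine ⟨(0, fun j => d j * y' j, z'), ?_, ?_⟩
    · refine Prod.ext rfl (funext fun j => ?_)
      exact (ZMod.intCast_zmod_eq_zero_iff_dvd _ _).2 (Dvd.intro _ rfl)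
    · refine Prod.ext (by simp [hx]) (Prod.ext (funext fun j => ?_) (funext fun i => ?_))
      · change 2 * (d j * y' j) = y j
        rw [hy', mul_assoc]
      · exact (hz' i).symm

end StandardPresentation

/-- If a free abelian group `M` surjects onto `ℤʳ ⊕ ⨁_{j < k} ℤ/dⱼℤ` with kernel `N` and has rank
`r + k + t`, then `M / 2N` is `ℤʳ ⊕ ⨁_{j < k} ℤ/2dⱼℤ ⊕ (ℤ/2ℤ)ᵗ`. -/
theorem nonempty_quotient_two_smul_ker_linearEquiv {M : Type*} [AddCommGroup M]
    [Module.Free ℤ M] [Module.Finite ℤ M] {r k t : ℕ} (d : Fin k → ℕ)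
    (f : M →ₗ[ℤ] (Fin r → ℤ) × ((j : Fin k) → ZMod (d j))) (hf : Function.Surjective f)
    (hM : Module.finrank ℤ M = r + k + t) :
    Nonempty ((M ⧸ (2 : ℤ) • LinearMap.ker f) ≃ₗ[ℤ]
      (Fin r → ℤ) × ((j : Fin k) → ZMod (2 * d j)) × (Fin t → ZMod 2)) := by
  obtain ⟨e⟩ := nonempty_quotient_smul_ker_prod_linearEquiv f (standardPresentation r t d) hf
    (standardPresentation_surjective r t d) 2
  obtain ⟨eM⟩ := nonempty_quotient_two_smul_top_linearEquiv hM
  obtain ⟨eF⟩ := nonempty_quotient_two_smul_top_linearEquiv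
    (M := (Fin r → ℤ) × (Fin k → ℤ) × (Fin t → ℤ)) (s := r + k + t) (by simp [add_assoc])
  obtain ⟨eT⟩ := nonempty_quotient_two_smul_ker_standardPresentation_linearEquiv r t d
  exact nonempty_linearEquiv_of_pi_zmod_two_prod (r + k + t)
    (LinearEquiv.prodComm ℤ _ _ ≪≫ₗ (LinearEquiv.refl ℤ _).prodCongr eF.symm ≪≫ₗ e ≪≫ₗ
      eM.prodCongr eT)

/-- let `β : ℤⁿ → ℤᵐ` be an integer matrix map, `α = 2β`, and `K ⊆ ℤᵐ` a
subgroup containing `im β`. If `K/im(β) ≅ ℤʳ ⊕ ℤ/d_1ℤ ⊕ ⋯ ⊕ ℤ/d_kℤ` with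
`1 < d_1 ∣ ⋯ ∣ d_k`, and `β` has rank `ρ`, then
`K/im(α) ≅ ℤʳ ⊕ ℤ/2d_1ℤ ⊕ ⋯ ⊕ ℤ/2d_kℤ ⊕ (ℤ/2ℤ)^{ρ−k}`. -/
theorem stmt_8 (m n r k : ℕ) (β : Matrix (Fin m) (Fin n) ℤ)
    (K : Submodule ℤ (Fin m → ℤ)) (d : Fin k → ℕ)
    (hd1 : ∀ j, 1 < d j)
    (hdvd : ∀ i j : Fin k, i ≤ j → d i ∣ d j)
    (hβK : LinearMap.range (Matrix.mulVecLin β) ≤ K)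
    (hαK : LinearMap.range (Matrix.mulVecLin ((2 : ℤ) • β)) ≤ K)
    (hβ : Nonempty
      ((K ⧸ (LinearMap.range (Matrix.mulVecLin β)).comap K.subtype) ≃ₗ[ℤ]
        (Fin r → ℤ) × ((j : Fin k) → ZMod (d j)))) :
    Nonempty
      ((K ⧸ (LinearMap.range (Matrix.mulVecLin ((2 : ℤ) • β))).comap K.subtype) ≃ₗ[ℤ]
        (Fin r → ℤ) × ((j : Fin k) → ZMod (2 * d j)) × (Fin (β.rank - k) → ZMod 2)) := by
  obtain ⟨e⟩ := hβ
  let N := (LinearMap.range (Matrix.mulVecLin β)).comap K.subtype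
  let f : K →ₗ[ℤ] (Fin r → ℤ) × ((j : Fin k) → ZMod (d j)) := e.toLinearMap ∘ₗ N.mkQ
  have hf : Function.Surjective f := e.surjective.comp N.mkQ_surjective
  have hker : LinearMap.ker f = N := by
    rw [LinearEquiv.ker_comp, Submodule.ker_mkQ]
  have hN : Module.finrank ℤ N = β.rank :=
    (Submodule.comapSubtypeEquivOfLe hβK).finrank_eq
  have hrank : Module.finrank ℤ K = r + β.rank := by
    rw [← Submodule.finrank_quotient_add_finrank N, hN, e.finrank_eq,
      finrank_pi_int_prod_pi_zmod r d fun j => (hd1 j).ne_bot]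
  have hk : k ≤ β.rank := by
    rcases Nat.eq_zero_or_pos k with rfl | hpos
    · exact Nat.zero_le _
    · obtain ⟨p, hp, hpd⟩ := Nat.exists_prime_and_dvd (hd1 ⟨0, hpos⟩).ne'
      have : Fact p.Prime := ⟨hp⟩
      have := add_le_finrank_of_surjective d
        (fun j => hpd.trans (hdvd ⟨0, hpos⟩ j (Nat.zero_le _))) f hf
      lia
  obtain ⟨e₂⟩ := nonempty_quotient_two_smul_ker_linearEquiv (t := β.rank - k) d f hf (by lia)
  refine ⟨Submodule.quotEquivOfEq _ _ ?_ ≪≫ₗ e₂⟩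
  rw [hker]
  ext x
  rw [Submodule.mem_smul_pointwise_iff_exists, Submodule.mem_comap]
  constructor
  · rintro ⟨v, hv⟩
    refine ⟨⟨β *ᵥ v, hβK ⟨v, rfl⟩⟩, ⟨v, rfl⟩, Subtype.ext ?_⟩
    rw [Submodule.subtype_apply, mulVecLin_apply, smul_mulVec] at hv
    exact hv
  · rintro ⟨y, ⟨v, hv⟩, rfl⟩
    refine ⟨v, ?_⟩
    rw [mulVecLin_apply] at hv ⊢
    rw [smul_mulVec, hv, map_zsmul]
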